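/- Let M be a task model and Δ(M) its set of minimal transitions (one pattern transition x ← P for each pattern node of M, and one expression transition x ← e for each expression node of M), partially ordered by dependency: a transition at variable x may only be triggered after the transition introducing x has been traversed, and an expression transition x ← e may only be triggered after all variables used by e have been introduced. Then every total ordering of Δ(M) compatible with this partial ordering yields a valid sequence of minimal transitions leading from the initial task model M₀ = (x₁ : ?, x₂ : ?) to M, i.e., applying the transitions in any such order produces well-formed task models at every intermediate step and ends at M. -/

import Mathlib

/-- A k-ary pattern: a relation between a whole value and a list of part values,
such that the whole is unique given the parts. -/
structure Pattern (V : Type) where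
  rel : V → List V → Prop
  functional : ∀ (vs : List V) (v v' : V), rel v vs → rel v' vs → v = v'

/-- A model: a finite tree whose nodes carry variables (naturals) and are either
unknowns, expressions, or pattern nodes with submodels. -/
inductive Model (V E : Type) : Type where
  | unknown : ℕ → Model V E
  | expr : ℕ → E → Model V E
  | pat : ℕ → Pattern V → List (Model V E) → Model V E

/-- A description: a finite tree assigning a value to each variable. -/
inductive Descr (V : Type) : Type where
  | atom : ℕ → V → Descr V
  | comp : ℕ → V → Pattern V → List (Descr V) → Descr V

def Descr.value {V : Type} : Descr V → V
  | .atom _ v => v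
  | .comp _ v _ _ => v

def Descr.rootVar {V : Type} : Descr V → ℕ
  | .atom x _ => x
  | .comp x _ _ _ => x

def Model.rootVar {V E : Type} : Model V E → ℕ
  | .unknown x => x
  | .expr x _ => x
  | .pat x _ _ => x

/-- Variables of a model. -/
def Model.vars {V E : Type} : Model V E → List ℕ
  | .unknown x => [x]
  | .expr x _ => [x]
  | .pat x _ ms => x :: (ms.attach.map (fun m => m.1.vars)).flatten
decreasing_by
  simp_wf
  have := List.sizeOf_lt_of_mem m.2
  omega

/-- Variables of a description. -/
def Descr.vars {V : Type} : Descr V → List ℕ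
  | .atom x _ => [x]
  | .comp x _ _ ds => x :: (ds.attach.map (fun d => d.1.vars)).flatten
decreasing_by
  simp_wf
  have := List.sizeOf_lt_of_mem d.2
  omega

/-- The generation relation `d ∈ m[σ]`, parameterized by a partial evaluation
function for expressions. -/
inductive Gen {V E : Type} (ev : E → (ℕ → Option V) → Option V) :
    Model V E → (ℕ → Option V) → Descr V → Prop where
  | unknown (x : ℕ) (σ : ℕ → Option V) (v : V) :
      Gen ev (.unknown x) σ (.atom x v)
  | expr (x : ℕ) (e : E) (σ : ℕ → Option V) (v : V) :
      ev e σ = some v → Gen ev (.expr x e) σ (.atom x v)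
  | pat (x : ℕ) (P : Pattern V) (ms : List (Model V E)) (σ : ℕ → Option V)
      (v : V) (ds : List (Descr V)) :
      ms.length = ds.length →
      P.rel v (ds.map Descr.value) →
      (∀ (i : ℕ) (h₁ : i < ms.length) (h₂ : i < ds.length),
        Gen ev (ms.get ⟨i, h₁⟩) σ (ds.get ⟨i, h₂⟩)) →
      Gen ev (.pat x P ms) σ (.comp x v P ds)

/-- `Model.Splits m x f c`: the variable `x` occurs in `m`, the `x`-factor (subtree
rooted at `x`) is `f`, and the `x`-context (with the subtree at `x` replaced by an
unknown) is `c`. -/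
inductive Model.Splits {V E : Type} : Model V E → ℕ → Model V E → Model V E → Prop where
  | here (m : Model V E) : Model.Splits m m.rootVar m (.unknown m.rootVar)
  | there (y : ℕ) (P : Pattern V) (ms : List (Model V E)) (i : ℕ) (h : i < ms.length)
      (x : ℕ) (f c : Model V E) :
      Model.Splits (ms.get ⟨i, h⟩) x f c →
      Model.Splits (.pat y P ms) x f (.pat y P (ms.set i c))

/-- `Descr.Splits d x f c`: the variable `x` occurs in `d`, the `x`-factor is `f`,
and the `x`-context (subtree at `x` replaced by an atomic description carrying the
value at `x`) is `c`. -/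
inductive Descr.Splits {V : Type} : Descr V → ℕ → Descr V → Descr V → Prop where
  | here (d : Descr V) : Descr.Splits d d.rootVar d (.atom d.rootVar d.value)
  | there (y : ℕ) (v : V) (P : Pattern V) (ds : List (Descr V)) (i : ℕ) (h : i < ds.length)
      (x : ℕ) (f c : Descr V) :
      Descr.Splits (ds.get ⟨i, h⟩) x f c →
      Descr.Splits (.comp y v P ds) x f (.comp y v P (ds.set i c))

/-- `Model.ReplaceAt m x m₀ m'`: the model `m'` results from `m` by replacing the
unknown leaf carrying variable `x` by the submodel `m₀` (i.e. `m' = m[x ← m₀]`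
where `m.x` is an unknown). -/
inductive Model.ReplaceAt {V E : Type} : Model V E → ℕ → Model V E → Model V E → Prop where
  | here (x : ℕ) (m₀ : Model V E) : Model.ReplaceAt (.unknown x) x m₀ m₀
  | there (y : ℕ) (P : Pattern V) (ms : List (Model V E)) (i : ℕ) (h : i < ms.length)
      (x : ℕ) (m₀ r : Model V E) :
      Model.ReplaceAt (ms.get ⟨i, h⟩) x m₀ r →
      Model.ReplaceAt (.pat y P ms) x m₀ (.pat y P (ms.set i r))

/-- The expressions occurring in a model. -/
def Model.exprs {V E : Type} : Model V E → List E
  | .unknown _ => []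
  | .expr _ e => [e]
  | .pat _ _ ms => (ms.attach.map (fun m => m.1.exprs)).flatten
decreasing_by
  simp_wf
  have := List.sizeOf_lt_of_mem m.2
  omega

/-- A task model: a pair of an input model and an output model. -/
structure TaskModel (V E : Type) where
  input : Model V E
  output : Model V E

/-- Well-formedness of a task model (relative to a function `exprVars` giving the
variables used by an expression): the variables of the two models are pairwise
distinct, and every expression (in particular every expression of the output
model) only uses variables introduced in the input model. -/
def TaskModel.Wf {V E : Type} (exprVars : E → List ℕ) (M : TaskModel V E) : Prop :=
  (M.input.vars ++ M.output.vars).Nodup ∧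
  (∀ e ∈ M.input.exprs, ∀ y ∈ exprVars e, y ∈ M.input.vars) ∧
  (∀ e ∈ M.output.exprs, ∀ y ∈ exprVars e, y ∈ M.input.vars)

/-- Minimal transitions between task models: replacing an unknown leaf `(x : ?)`
of the input or output model either by `P(x₁ : ?, …, x_k : ?)` for a pattern `P`
with fresh variables `x₁,…,x_k`, or by a well-defined expression `e`, i.e. one all
of whose variables are introduced in the input model. -/
inductive MinStep {V E : Type} (exprVars : E → List ℕ) :
    TaskModel V E → TaskModel V E → Prop where
  | patInput (M : TaskModel V E) (x : ℕ) (P : Pattern V) (xs : List ℕ) (mi' : Model V E) :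
      xs.Nodup →
      (∀ y ∈ xs, y ∉ M.input.vars ∧ y ∉ M.output.vars) →
      Model.ReplaceAt M.input x (.pat x P (xs.map .unknown)) mi' →
      MinStep exprVars M ⟨mi', M.output⟩
  | patOutput (M : TaskModel V E) (x : ℕ) (P : Pattern V) (xs : List ℕ) (mo' : Model V E) :
      xs.Nodup →
      (∀ y ∈ xs, y ∉ M.input.vars ∧ y ∉ M.output.vars) →
      Model.ReplaceAt M.output x (.pat x P (xs.map .unknown)) mo' →
      MinStep exprVars M ⟨M.input, mo'⟩
  | exprInput (M : TaskModel V E) (x : ℕ) (e : E) (mi' : Model V E) :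
      (∀ y ∈ exprVars e, y ∈ M.input.vars) →
      Model.ReplaceAt M.input x (.expr x e) mi' →
      MinStep exprVars M ⟨mi', M.output⟩
  | exprOutput (M : TaskModel V E) (x : ℕ) (e : E) (mo' : Model V E) :
      (∀ y ∈ exprVars e, y ∈ M.input.vars) →
      Model.ReplaceAt M.output x (.expr x e) mo' →
      MinStep exprVars M ⟨M.input, mo'⟩

/-- A minimal-transition specification: either a pattern transition `x ← P`
(recording the variables of the fresh all-unknown children), or an expression
transition `x ← e`. -/
inductive TransSpec (V E : Type) : Type where
  | patT : ℕ → Pattern V → List ℕ → TransSpec V E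
  | exprT : ℕ → E → TransSpec V E

/-- The variable at which a transition acts. -/
def TransSpec.tvar {V E : Type} : TransSpec V E → ℕ
  | .patT x _ _ => x
  | .exprT x _ => x

/-- `t.introduces y`: the transition `t` introduces the variable `y`
(pattern transitions introduce the variables of their fresh children). -/
def TransSpec.introduces {V E : Type} : TransSpec V E → ℕ → Prop
  | .patT _ _ xs, y => y ∈ xs
  | .exprT _ _, _ => False

/-- The dependency ordering on transitions: `t₂` depends on `t₁` iff `t₁`
introduces the variable at which `t₂` acts, or `t₂` is an expression transition
`x ← e` and `t₁` introduces some variable used by `e`. -/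
def TransDependsOn {V E : Type} (exprVars : E → List ℕ) (t₁ t₂ : TransSpec V E) : Prop :=
  t₁.introduces t₂.tvar ∨
    (match t₂ with
     | .exprT _ e => ∃ y ∈ exprVars e, t₁.introduces y
     | .patT _ _ _ => False)

/-- The set `Δ(m)` of minimal transitions of a model `m`: one pattern transition
`x ← P` for each pattern node `m.x = P(m₁,…,m_k)`, and one expression transition
`x ← e` for each expression node `m.x = e`. -/
def Model.specs {V E : Type} : Model V E → List (TransSpec V E)
  | .unknown _ => []
  | .expr x e => [.exprT x e]
  | .pat x P ms => .patT x P (ms.map Model.rootVar) ::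
      (ms.attach.map (fun m => m.1.specs)).flatten
decreasing_by
  simp_wf
  have := List.sizeOf_lt_of_mem m.2
  omega

/-- Applying a transition specification to a task model, as a minimal transition:
the unknown leaf at the transition's variable (in the input or output model) is
replaced by the specified submodel, subject to the minimal-transition side
conditions (freshness of the pattern children variables; expression variables
introduced in the input model). -/
inductive ApplySpec {V E : Type} (exprVars : E → List ℕ) :
    TaskModel V E → TransSpec V E → TaskModel V E → Prop where
  | patInput (M : TaskModel V E) (x : ℕ) (P : Pattern V) (xs : List ℕ) (mi' : Model V E) :
      xs.Nodup →
      (∀ y ∈ xs, y ∉ M.input.vars ∧ y ∉ M.output.vars) →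
      Model.ReplaceAt M.input x (.pat x P (xs.map .unknown)) mi' →
      ApplySpec exprVars M (.patT x P xs) ⟨mi', M.output⟩
  | patOutput (M : TaskModel V E) (x : ℕ) (P : Pattern V) (xs : List ℕ) (mo' : Model V E) :
      xs.Nodup →
      (∀ y ∈ xs, y ∉ M.input.vars ∧ y ∉ M.output.vars) →
      Model.ReplaceAt M.output x (.pat x P (xs.map .unknown)) mo' →
      ApplySpec exprVars M (.patT x P xs) ⟨M.input, mo'⟩
  | exprInput (M : TaskModel V E) (x : ℕ) (e : E) (mi' : Model V E) :
      (∀ y ∈ exprVars e, y ∈ M.input.vars) →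
      Model.ReplaceAt M.input x (.expr x e) mi' →
      ApplySpec exprVars M (.exprT x e) ⟨mi', M.output⟩
  | exprOutput (M : TaskModel V E) (x : ℕ) (e : E) (mo' : Model V E) :
      (∀ y ∈ exprVars e, y ∈ M.input.vars) →
      Model.ReplaceAt M.output x (.expr x e) mo' →
      ApplySpec exprVars M (.exprT x e) ⟨M.input, mo'⟩

/-- `Chain exprVars M L M'`: applying the transitions of the list `L` in order
leads from the task model `M` to the task model `M'`, each step being a valid
minimal transition producing a well-formed task model. -/
inductive Chain {V E : Type} (exprVars : E → List ℕ) :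
    TaskModel V E → List (TransSpec V E) → TaskModel V E → Prop where
  | nil (M : TaskModel V E) : Chain exprVars M [] M
  | cons (M M' M'' : TaskModel V E) (t : TransSpec V E) (ts : List (TransSpec V E)) :
      ApplySpec exprVars M t M' →
      TaskModel.Wf exprVars M' →
      Chain exprVars M' ts M'' →
      Chain exprVars M (t :: ts) M''

namespace Model

variable {V E : Type}

theorem induction_on_children {p : Model V E → Prop} (unknown : ∀ x, p (.unknown x))
    (expr : ∀ x e, p (.expr x e)) (pat : ∀ x P ms, (∀ m ∈ ms, p m) → p (.pat x P ms)) :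
    ∀ m, p m
  | .unknown x => unknown x
  | .expr x e => expr x e
  | .pat x P ms => pat x P ms fun m _ => induction_on_children unknown expr pat m

@[simp]
theorem vars_unknown (x : ℕ) : (unknown x : Model V E).vars = [x] := by
  rw [vars]

@[simp]
theorem vars_expr (x : ℕ) (e : E) : (expr x e : Model V E).vars = [x] := by
  rw [vars]

@[simp]
theorem vars_pat (x : ℕ) (P : Pattern V) (ms : List (Model V E)) :
    (pat x P ms).vars = x :: ms.flatMap vars := by
  rw [vars, List.attach_map_val, List.flatMap_def]

@[simp]
theorem exprs_unknown (x : ℕ) : (unknown x : Model V E).exprs = [] := by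
  rw [exprs]

@[simp]
theorem exprs_expr (x : ℕ) (e : E) : (expr x e : Model V E).exprs = [e] := by
  rw [exprs]

@[simp]
theorem exprs_pat (x : ℕ) (P : Pattern V) (ms : List (Model V E)) :
    (pat x P ms).exprs = ms.flatMap exprs := by
  rw [exprs, List.attach_map_val, List.flatMap_def]

@[simp]
theorem specs_unknown (x : ℕ) : (unknown x : Model V E).specs = [] := by
  rw [specs]

@[simp]
theorem specs_expr (x : ℕ) (e : E) : (expr x e : Model V E).specs = [.exprT x e] := by
  rw [specs]

@[simp]
theorem specs_pat (x : ℕ) (P : Pattern V) (ms : List (Model V E)) :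
    (pat x P ms).specs = .patT x P (ms.map rootVar) :: ms.flatMap specs := by
  rw [specs, List.attach_map_val, List.flatMap_def]

theorem rootVar_mem_vars (m : Model V E) : m.rootVar ∈ m.vars := by
  cases m <;> simp [rootVar]

theorem specs_map_tvar_sublist_vars (m : Model V E) :
    (m.specs.map TransSpec.tvar).Sublist m.vars := by
  induction m using induction_on_children with
  | unknown x => simp
  | expr x e => simp [TransSpec.tvar]
  | pat x P ms ih =>
    simp only [specs_pat, vars_pat, List.map_cons, TransSpec.tvar, List.map_flatMap]
    refine List.Sublist.cons_cons _ ?_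
    induction ms with
    | nil => simp
    | cons a l ihl =>
      simp only [List.flatMap_cons]
      exact (ih a (by simp)).append (ihl fun m hm => ih m (by simp [hm]))

theorem tvar_mem_vars {m : Model V E} {t : TransSpec V E} (ht : t ∈ m.specs) :
    t.tvar ∈ m.vars :=
  m.specs_map_tvar_sublist_vars.subset (List.mem_map_of_mem ht)

open Classical in
/-- The part of a model that is built once exactly the nodes with variables in `S` have been
expanded: every node whose variable is outside `S` is cut back to an unknown leaf. -/
noncomputable def trunc (S : Set ℕ) : Model V E → Model V E
  | .unknown x => .unknown x
  | .expr x e => if x ∈ S then .expr x e else .unknown x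
  | .pat x P ms => if x ∈ S then .pat x P (ms.attach.map fun m => m.1.trunc S) else .unknown x
decreasing_by
  simp_wf
  have := List.sizeOf_lt_of_mem m.2
  omega

@[simp]
theorem trunc_unknown (S : Set ℕ) (x : ℕ) : (unknown x : Model V E).trunc S = .unknown x := by
  rw [trunc]

open Classical in
@[simp]
theorem trunc_expr (S : Set ℕ) (x : ℕ) (e : E) :
    (expr x e : Model V E).trunc S = if x ∈ S then .expr x e else .unknown x := by
  rw [trunc]

open Classical in
@[simp]
theorem trunc_pat (S : Set ℕ) (x : ℕ) (P : Pattern V) (ms : List (Model V E)) :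
    (pat x P ms).trunc S = if x ∈ S then .pat x P (ms.map (trunc S)) else .unknown x := by
  rw [trunc, List.attach_map_val]

theorem trunc_of_rootVar_notMem {S : Set ℕ} {m : Model V E} (h : m.rootVar ∉ S) :
    m.trunc S = .unknown m.rootVar := by
  cases m <;> simp_all [rootVar]

theorem vars_trunc_sublist (S : Set ℕ) (m : Model V E) : (m.trunc S).vars.Sublist m.vars := by
  induction m using induction_on_children with
  | unknown x => simp
  | expr x e => by_cases h : x ∈ S <;> simp [h]
  | pat x P ms ih =>
    by_cases h : x ∈ S
    · simp only [trunc_pat, h, if_true, vars_pat]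
      refine List.Sublist.cons_cons _ ?_
      induction ms with
      | nil => simp
      | cons a l ihl =>
        simp only [List.map_cons, List.flatMap_cons]
        exact (ih a (by simp)).append (ihl fun m hm => ih m (by simp [hm]))
    · simp [h]

theorem trunc_insert_of_notMem_vars {S : Set ℕ} {x : ℕ} {m : Model V E} (hx : x ∉ m.vars) :
    m.trunc (insert x S) = m.trunc S := by
  induction m using induction_on_children with
  | unknown y => simp
  | expr y e =>
    have : y ≠ x := by simpa [eq_comm] using hx
    by_cases h : y ∈ S <;> simp [h, this]
  | pat y P ms ih =>
    simp only [vars_pat, List.mem_cons, List.mem_flatMap, not_or, not_exists, not_and] at hx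
    have hmap : ms.map (trunc (insert x S)) = ms.map (trunc S) :=
      List.map_congr_left fun m hm => ih m hm (hx.2 m hm)
    by_cases h : y ∈ S <;> simp [h, hmap, Ne.symm hx.1]

theorem trunc_eq_self {S : Set ℕ} {m : Model V E} (h : ∀ t ∈ m.specs, t.tvar ∈ S) :
    m.trunc S = m := by
  induction m using induction_on_children with
  | unknown x => simp
  | expr x e => simpa [TransSpec.tvar] using h
  | pat x P ms ih =>
    have hx : x ∈ S := h (.patT x P (ms.map rootVar)) (by simp)
    have hmap : ms.map (trunc S) = ms :=
      (List.map_congr_left fun m hm => ih m hm fun t ht => h t (by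
        rw [specs_pat, List.mem_cons, List.mem_flatMap]
        exact .inr ⟨m, hm, ht⟩)).trans (List.map_id' ms)
    simp [hx, hmap]

/-- A variable all of whose introducing transitions have been performed is present. -/
theorem mem_vars_trunc {S : Set ℕ} {m : Model V E} {y : ℕ}
    (hy : y ∈ m.vars)
    (hclosed : ∀ p ∈ m.specs, ∀ z, p.introduces z → z ∈ S → p.tvar ∈ S)
    (hintro : ∀ p ∈ m.specs, p.introduces y → p.tvar ∈ S) : y ∈ (m.trunc S).vars := by
  induction m using induction_on_children with
  | unknown x => simpa using hy
  | expr x e => by_cases h : x ∈ S <;> simpa [h] using hy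
  | pat x P ms ih =>
    simp only [vars_pat, List.mem_cons, List.mem_flatMap] at hy
    rcases hy with rfl | ⟨m, hm, hym⟩
    · by_cases h : y ∈ S <;> simp [h]
    · have hsub : ∀ p ∈ m.specs, p ∈ (pat x P ms).specs := fun p hp => by
        simp only [specs_pat, List.mem_cons, List.mem_flatMap]
        exact .inr ⟨m, hm, hp⟩
      have hmem := ih m hm hym (fun p hp => hclosed p (hsub p hp))
        (fun p hp => hintro p (hsub p hp))
      have hroot : m.rootVar ∈ ms.map rootVar := List.mem_map_of_mem hm
      have hx : x ∈ S := by
        by_cases h : m.rootVar ∈ S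
        · exact hclosed (.patT x P (ms.map rootVar)) (by simp) _ hroot h
        · rw [trunc_of_rootVar_notMem h, vars_unknown, List.mem_singleton] at hmem
          exact hintro (.patT x P (ms.map rootVar)) (by simp) (hmem ▸ hroot)
      simp only [trunc_pat, hx, if_true, vars_pat, List.mem_cons, List.mem_flatMap, List.mem_map]
      exact .inr ⟨_, ⟨m, hm, rfl⟩, hmem⟩

theorem rootVar_mem_of_tvar_mem {S : Set ℕ} {m : Model V E} {t : TransSpec V E}
    (hclosed : ∀ p ∈ m.specs, ∀ z, p.introduces z → z ∈ S → p.tvar ∈ S)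
    (ht : t ∈ m.specs) (htS : t.tvar ∈ S) : m.rootVar ∈ S := by
  induction m using induction_on_children with
  | unknown x => simp at ht
  | expr x e =>
    obtain rfl : t = .exprT x e := by simpa using ht
    exact htS
  | pat x P ms ih =>
    simp only [specs_pat, List.mem_cons, List.mem_flatMap] at ht
    rcases ht with rfl | ⟨m, hm, htm⟩
    · exact htS
    · refine hclosed (.patT x P (ms.map rootVar)) (by simp) m.rootVar
        (List.mem_map_of_mem hm) (ih m hm (fun p hp => hclosed p ?_) htm)
      simp only [specs_pat, List.mem_cons, List.mem_flatMap]
      exact .inr ⟨m, hm, hp⟩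

theorem ReplaceAt.pat_append {m m₀ r : Model V E} {x : ℕ} (h : ReplaceAt m x m₀ r) (y : ℕ)
    (P : Pattern V) (l₁ l₂ : List (Model V E)) :
    ReplaceAt (.pat y P (l₁ ++ m :: l₂)) x m₀ (.pat y P (l₁ ++ r :: l₂)) := by
  have hstep := ReplaceAt.there y P (l₁ ++ m :: l₂) l₁.length (by simp) x m₀ r (by simpa using h)
  simpa using hstep

/-- Replacing a leaf replaces one occurrence of its variable in the variable list, and inserts
the expressions of the new submodel into the list of expressions. -/
theorem ReplaceAt.exists_decomposition {m m₀ m' : Model V E} {x : ℕ} (h : ReplaceAt m x m₀ m') :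
    (∃ l₁ l₂, m.vars = l₁ ++ x :: l₂ ∧ m'.vars = l₁ ++ m₀.vars ++ l₂) ∧
      ∃ k₁ k₂, m.exprs = k₁ ++ k₂ ∧ m'.exprs = k₁ ++ m₀.exprs ++ k₂ := by
  induction h with
  | here x m₀ => exact ⟨⟨[], [], by simp, by simp⟩, [], [], by simp, by simp⟩
  | there y P ms i h x m₀ r _ ih =>
    obtain ⟨⟨l₁, l₂, hl, hl'⟩, k₁, k₂, hk, hk'⟩ := ih
    have hms : ms = ms.take i ++ ms.get ⟨i, h⟩ :: ms.drop (i + 1) := by simp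
    have hset : ms.set i r = ms.take i ++ r :: ms.drop (i + 1) := by
      rw [List.set_eq_take_append_cons_drop, if_pos h]
    refine ⟨⟨y :: (ms.take i).flatMap vars ++ l₁, l₂ ++ (ms.drop (i + 1)).flatMap vars, ?_, ?_⟩,
      (ms.take i).flatMap exprs ++ k₁, k₂ ++ (ms.drop (i + 1)).flatMap exprs, ?_, ?_⟩
    · conv_lhs => rw [hms]
      rw [vars_pat, List.flatMap_append, List.flatMap_cons, hl]
      simp
    · rw [hset, vars_pat, List.flatMap_append, List.flatMap_cons, hl']
      simp
    · conv_lhs => rw [hms]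
      rw [exprs_pat, List.flatMap_append, List.flatMap_cons, hk]
      simp
    · rw [hset, exprs_pat, List.flatMap_append, List.flatMap_cons, hk']
      simp

end Model

/-- The submodel that a transition puts in place of the unknown leaf. -/
def TransSpec.newModel {V E : Type} : TransSpec V E → Model V E
  | .patT x P xs => .pat x P (xs.map .unknown)
  | .exprT x e => .expr x e

/-- The variables used by the expression of an expression transition. -/
def TransSpec.usedVars {V E : Type} (exprVars : E → List ℕ) : TransSpec V E → List ℕ
  | .patT _ _ _ => []
  | .exprT _ e => exprVars e

section

variable {V E : Type} {exprVars : E → List ℕ}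

open Model

theorem TransSpec.tvar_mem_vars_newModel (t : TransSpec V E) : t.tvar ∈ t.newModel.vars := by
  cases t <;> simp [tvar, newModel]

theorem TransSpec.mem_usedVars_of_mem_exprs_newModel {t : TransSpec V E} {e : E} {y : ℕ}
    (he : e ∈ t.newModel.exprs) (hy : y ∈ exprVars e) : y ∈ t.usedVars exprVars := by
  cases t with
  | patT x P xs => simp [newModel] at he
  | exprT x e' =>
    obtain rfl : e = e' := by simpa [newModel] using he
    exact hy

theorem transDependsOn_of_mem_usedVars {p t : TransSpec V E} {y : ℕ}
    (hy : y ∈ t.usedVars exprVars) (hp : p.introduces y) : TransDependsOn exprVars p t := by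
  cases t with
  | patT x P xs => simp [TransSpec.usedVars] at hy
  | exprT x e => exact .inr ⟨y, hy, hp⟩

/-- Performing a transition of `m` on the truncation of `m` enlarges the truncation by one node. -/
theorem Model.replaceAt_trunc_insert {S : Set ℕ} {m : Model V E} {t : TransSpec V E}
    (hnodup : m.vars.Nodup) (ht : t ∈ m.specs) (htS : t.tvar ∉ S)
    (hclosed : ∀ p ∈ m.specs, ∀ z, p.introduces z → z ∈ S → p.tvar ∈ S)
    (hclosed' : ∀ p ∈ m.specs, ∀ z, p.introduces z → z ∈ insert t.tvar S →
      p.tvar ∈ insert t.tvar S) :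
    ReplaceAt (m.trunc S) t.tvar t.newModel (m.trunc (insert t.tvar S)) := by
  induction m using induction_on_children with
  | unknown x => simp at ht
  | expr x e =>
    obtain rfl : t = .exprT x e := by simpa using ht
    have hx : x ∉ S := htS
    simpa [hx, TransSpec.tvar, TransSpec.newModel] using ReplaceAt.here x (.expr x e)
  | pat x P ms ih =>
    simp only [vars_pat, List.nodup_cons, List.mem_flatMap, not_exists, not_and] at hnodup
    obtain ⟨hxms, hms⟩ := hnodup
    have hpat : TransSpec.patT x P (ms.map rootVar) ∈ (pat x P ms).specs := by simp
    rw [specs_pat, List.mem_cons, List.mem_flatMap] at ht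
    rcases ht with rfl | ⟨m, hm, htm⟩
    · have hx : x ∉ S := htS
      have hmap : ms.map (trunc (insert x S)) = (ms.map rootVar).map .unknown := by
        rw [List.map_map]
        refine List.map_congr_left fun m hm => trunc_of_rootVar_notMem ?_
        rintro (h | h)
        · exact hxms m hm (h ▸ m.rootVar_mem_vars)
        · exact hx (hclosed _ hpat _ (List.mem_map_of_mem hm) h)
      simp only [TransSpec.tvar, TransSpec.newModel, trunc_pat, hx, if_false,
        Set.mem_insert_iff, true_or, if_true, hmap]
      exact ReplaceAt.here _ _
    · have hsub : ∀ p ∈ m.specs, p ∈ (pat x P ms).specs := fun p hp => by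
        simp only [specs_pat, List.mem_cons, List.mem_flatMap]
        exact .inr ⟨m, hm, hp⟩
      have htv := tvar_mem_vars htm
      have hroot := rootVar_mem_of_tvar_mem (fun p hp => hclosed' p (hsub p hp)) htm
        (Set.mem_insert _ _)
      have hx' : x ∈ insert t.tvar S := hclosed' _ hpat _ (List.mem_map_of_mem hm) hroot
      have hx : x ∈ S := hx'.resolve_left fun h => hxms m hm (h ▸ htv)
      obtain ⟨l₁, l₂, rfl⟩ := List.append_of_mem hm
      have hrep := ih m hm (List.nodup_flatMap.1 hms |>.1 m hm) htm
        (fun p hp => hclosed p (hsub p hp)) (fun p hp => hclosed' p (hsub p hp))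
      rw [List.flatMap_append, List.flatMap_cons, List.nodup_append', List.nodup_append'] at hms
      have h₁ : l₁.map (trunc (insert t.tvar S)) = l₁.map (trunc S) :=
        List.map_congr_left fun a ha => trunc_insert_of_notMem_vars fun h =>
          hms.2.2 (List.mem_flatMap.2 ⟨a, ha, h⟩) (List.mem_append_left _ htv)
      have h₂ : l₂.map (trunc (insert t.tvar S)) = l₂.map (trunc S) :=
        List.map_congr_left fun a ha => trunc_insert_of_notMem_vars fun h =>
          hms.2.1.2.2 htv (List.mem_flatMap.2 ⟨a, ha, h⟩)
      simp only [trunc_pat, hx, hx', if_true, List.map_append, List.map_cons, h₁, h₂]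
      exact hrep.pat_append x P _ _

theorem TransSpec.fresh_of_nodup {t : TransSpec V E} {m m' n : Model V E}
    (h : ReplaceAt m t.tvar t.newModel m') (hnodup : (m'.vars ++ n.vars).Nodup)
    {P : Pattern V} {x : ℕ} {xs : List ℕ} (ht : t = .patT x P xs) :
    xs.Nodup ∧ ∀ y ∈ xs, y ∉ m.vars ∧ y ∉ n.vars := by
  subst ht
  obtain ⟨⟨l₁, l₂, hl, hl'⟩, -⟩ := h.exists_decomposition
  have hxs : (xs.map Model.unknown : List (Model V E)).flatMap vars = xs := by
    simp [List.flatMap_map]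
  simp only [newModel, tvar, vars_pat, hxs] at hl hl'
  rw [hl'] at hnodup
  rw [hl]
  simp only [List.nodup_append, List.nodup_cons, List.mem_append, List.mem_cons] at hnodup ⊢
  clear h hl hl' hxs
  grind

theorem ApplySpec.of_replaceAt_input {M : TaskModel V E} {t : TransSpec V E} {m' : Model V E}
    (h : ReplaceAt M.input t.tvar t.newModel m') (hnodup : (m'.vars ++ M.output.vars).Nodup)
    (hused : ∀ y ∈ t.usedVars exprVars, y ∈ M.input.vars) :
    ApplySpec exprVars M t ⟨m', M.output⟩ := by
  cases t with
  | patT x P xs =>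
    obtain ⟨hxs, hfresh⟩ := TransSpec.fresh_of_nodup h hnodup rfl
    exact .patInput M x P xs m' hxs hfresh h
  | exprT x e => exact .exprInput M x e m' hused h

theorem ApplySpec.of_replaceAt_output {M : TaskModel V E} {t : TransSpec V E} {m' : Model V E}
    (h : ReplaceAt M.output t.tvar t.newModel m') (hnodup : (M.input.vars ++ m'.vars).Nodup)
    (hused : ∀ y ∈ t.usedVars exprVars, y ∈ M.input.vars) :
    ApplySpec exprVars M t ⟨M.input, m'⟩ := by
  cases t with
  | patT x P xs =>
    obtain ⟨hxs, hfresh⟩ := TransSpec.fresh_of_nodup h (List.nodup_append_comm.1 hnodup) rfl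
    exact .patOutput M x P xs m' hxs (fun y hy => (hfresh y hy).symm) h
  | exprT x e => exact .exprOutput M x e m' hused h

theorem Model.ReplaceAt.vars_subset {m m' : Model V E} {t : TransSpec V E}
    (h : ReplaceAt m t.tvar t.newModel m') : m.vars ⊆ m'.vars := by
  obtain ⟨⟨l₁, l₂, hl, hl'⟩, -⟩ := h.exists_decomposition
  have := t.tvar_mem_vars_newModel
  intro y hy
  rw [hl] at hy
  rw [hl']
  simp only [List.mem_append, List.mem_cons] at hy ⊢
  grind

theorem Model.ReplaceAt.exprs_bound {m m' : Model V E} {t : TransSpec V E} {s : List ℕ}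
    (h : ReplaceAt m t.tvar t.newModel m') (hm : ∀ e ∈ m.exprs, ∀ y ∈ exprVars e, y ∈ s)
    (hused : ∀ y ∈ t.usedVars exprVars, y ∈ s) :
    ∀ e ∈ m'.exprs, ∀ y ∈ exprVars e, y ∈ s := by
  obtain ⟨-, k₁, k₂, hk, hk'⟩ := h.exists_decomposition
  intro e he y hy
  simp only [hk', List.mem_append] at he
  rcases he with (he | he) | he
  · exact hm e (by simp [hk, he]) y hy
  · exact hused y (TransSpec.mem_usedVars_of_mem_exprs_newModel he hy)
  · exact hm e (by simp [hk, he]) y hy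

/-- The truncation of both components of a task model. -/
noncomputable def TaskModel.trunc (S : Set ℕ) (M : TaskModel V E) : TaskModel V E :=
  ⟨M.input.trunc S, M.output.trunc S⟩

theorem TaskModel.nodup_vars_trunc {M : TaskModel V E} (S : Set ℕ)
    (h : (M.input.vars ++ M.output.vars).Nodup) :
    ((M.trunc S).input.vars ++ (M.trunc S).output.vars).Nodup :=
  h.sublist ((M.input.vars_trunc_sublist S).append (M.output.vars_trunc_sublist S))

theorem Model.usedVars_subset {m : Model V E} {t : TransSpec V E} {s : List ℕ}
    (hm : ∀ e ∈ m.exprs, ∀ y ∈ exprVars e, y ∈ s) (ht : t ∈ m.specs) :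
    ∀ y ∈ t.usedVars exprVars, y ∈ s := by
  induction m using induction_on_children with
  | unknown x => simp at ht
  | expr x e =>
    obtain rfl : t = .exprT x e := by simpa using ht
    exact hm e (by simp)
  | pat x P ms ih =>
    rw [specs_pat, List.mem_cons, List.mem_flatMap] at ht
    rcases ht with rfl | ⟨m, hmem, htm⟩
    · simp [TransSpec.usedVars]
    · refine ih m hmem (fun e he => hm e ?_) htm
      rw [exprs_pat, List.mem_flatMap]
      exact ⟨m, hmem, he⟩

theorem TaskModel.Wf.usedVars_subset {M : TaskModel V E} {t : TransSpec V E}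
    (hwf : M.Wf exprVars) (ht : t ∈ M.input.specs ++ M.output.specs) :
    ∀ y ∈ t.usedVars exprVars, y ∈ M.input.vars :=
  (List.mem_append.1 ht).elim (Model.usedVars_subset hwf.2.1) (Model.usedVars_subset hwf.2.2)

/-- One step of a path: a transition all of whose dependencies have been performed can be
performed, and leads to a well-formed task model. -/
theorem TaskModel.applySpec_trunc_insert {M : TaskModel V E} {S : Set ℕ} {t : TransSpec V E}
    (hwf : M.Wf exprVars) (hS : (M.trunc S).Wf exprVars)
    (ht : t ∈ M.input.specs ++ M.output.specs) (htS : t.tvar ∉ S)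
    (hclosed : ∀ p ∈ M.input.specs ++ M.output.specs, ∀ z, p.introduces z → z ∈ S → p.tvar ∈ S)
    (hdep : ∀ p ∈ M.input.specs ++ M.output.specs, TransDependsOn exprVars p t → p.tvar ∈ S) :
    ApplySpec exprVars (M.trunc S) t (M.trunc (insert t.tvar S)) ∧
      (M.trunc (insert t.tvar S)).Wf exprVars := by
  have hclosed' : ∀ p ∈ M.input.specs ++ M.output.specs, ∀ z, p.introduces z →
      z ∈ insert t.tvar S → p.tvar ∈ insert t.tvar S := by
    rintro p hp z hz (rfl | hzS)
    · exact .inr (hdep p hp (.inl hz))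
    · exact .inr (hclosed p hp z hz hzS)
  have hnodup := nodup_vars_trunc (insert t.tvar S) hwf.1
  obtain ⟨hin, hout, hdisj⟩ := List.nodup_append'.1 hwf.1
  have hinput : ∀ p ∈ M.input.specs, p ∈ M.input.specs ++ M.output.specs :=
    fun p hp => List.mem_append_left _ hp
  have houtput : ∀ p ∈ M.output.specs, p ∈ M.input.specs ++ M.output.specs :=
    fun p hp => List.mem_append_right _ hp
  have hused : ∀ y ∈ t.usedVars exprVars, y ∈ (M.trunc S).input.vars := by
    intro y hy
    refine mem_vars_trunc ?_ (fun p hp => hclosed p (hinput p hp)) fun p hp hpy =>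
      hdep p (hinput p hp) (transDependsOn_of_mem_usedVars hy hpy)
    exact hwf.usedVars_subset ht y hy
  rcases List.mem_append.1 ht with hti | hto
  · have hrep := replaceAt_trunc_insert hin hti htS (fun p hp => hclosed p (hinput p hp))
      (fun p hp => hclosed' p (hinput p hp))
    have heq : M.trunc (insert t.tvar S) =
        ⟨M.input.trunc (insert t.tvar S), (M.trunc S).output⟩ := by
      simp only [trunc, trunc_insert_of_notMem_vars (hdisj (tvar_mem_vars hti))]
    rw [heq] at hnodup ⊢
    refine ⟨.of_replaceAt_input hrep hnodup hused, hnodup, ?_, ?_⟩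
    · exact fun e he y hy => hrep.vars_subset (hrep.exprs_bound hS.2.1 hused e he y hy)
    · exact fun e he y hy => hrep.vars_subset (hS.2.2 e he y hy)
  · have hrep := replaceAt_trunc_insert hout hto htS (fun p hp => hclosed p (houtput p hp))
      (fun p hp => hclosed' p (houtput p hp))
    have heq : M.trunc (insert t.tvar S) =
        ⟨(M.trunc S).input, M.output.trunc (insert t.tvar S)⟩ := by
      simp only [trunc, trunc_insert_of_notMem_vars fun h => hdisj h (tvar_mem_vars hto)]
    rw [heq] at hnodup ⊢
    exact ⟨.of_replaceAt_output hrep hnodup hused, hnodup, hS.2.1,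
      hrep.exprs_bound hS.2.2 hused⟩

/-- The set of variables at which the transitions of a list act. -/
def tvarSet (L : List (TransSpec V E)) : Set ℕ :=
  {x | x ∈ L.map TransSpec.tvar}

theorem tvarSet_append_singleton (L : List (TransSpec V E)) (t : TransSpec V E) :
    tvarSet (L ++ [t]) = insert t.tvar (tvarSet L) := by
  ext x
  simp [tvarSet, or_comm, eq_comm]

end

/-- Let `M` be a (well-formed) task model and `Δ(M)` its set of
minimal transitions (one pattern transition per pattern node of `M` and one
expression transition per expression node of `M`), partially ordered by
dependency. Then every total ordering `L` of `Δ(M)` compatible with this partial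
ordering (dependencies come strictly earlier) yields a valid sequence of minimal
transitions leading from the initial task model `M₀ = (x₁ : ?, x₂ : ?)` to `M`:
applying the transitions in that order produces well-formed task models at every
intermediate step and ends at `M`. -/
theorem linear_extension_yields_valid_path {V E : Type}
    (exprVars : E → List ℕ) (M : TaskModel V E) (hwf : M.Wf exprVars)
    (L : List (TransSpec V E))
    (hperm : L.Perm (M.input.specs ++ M.output.specs))
    (hcompat : ∀ (i j : ℕ) (hi : i < L.length) (hj : j < L.length),
      TransDependsOn exprVars (L.get ⟨i, hi⟩) (L.get ⟨j, hj⟩) → i < j) :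
    Chain exprVars ⟨.unknown M.input.rootVar, .unknown M.output.rootVar⟩ L M := by
  have hnodupL : (L.map TransSpec.tvar).Nodup := by
    rw [(hperm.map _).nodup_iff, List.map_append]
    exact hwf.1.sublist
      (M.input.specs_map_tvar_sublist_vars.append M.output.specs_map_tvar_sublist_vars)
  have hmem : ∀ p, p ∈ M.input.specs ++ M.output.specs ↔ p ∈ L := fun p => hperm.mem_iff.symm
  have hbefore : ∀ L₁ L₂ t p, L = L₁ ++ t :: L₂ → p ∈ L → TransDependsOn exprVars p t →
      p ∈ L₁ := by
    rintro L₁ L₂ t p rfl hp hdep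
    obtain ⟨i, hi, rfl⟩ := List.mem_iff_getElem.1 hp
    have hlt : i < L₁.length := hcompat i L₁.length hi (by simp) (by simpa using hdep)
    rw [List.getElem_append_left hlt]
    exact List.getElem_mem hlt
  have hchain : ∀ L₂ L₁, L = L₁ ++ L₂ → (M.trunc (tvarSet L₁)).Wf exprVars →
      Chain exprVars (M.trunc (tvarSet L₁)) L₂ M := by
    intro L₂
    induction L₂ with
    | nil =>
      intro L₁ hL _
      have hall : ∀ p ∈ M.input.specs ++ M.output.specs, p.tvar ∈ tvarSet L₁ := fun p hp =>
        List.mem_map_of_mem (by simpa [hL] using (hmem p).1 hp)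
      have hM : M.trunc (tvarSet L₁) = M := by
        rw [TaskModel.trunc, Model.trunc_eq_self fun t ht => hall t (List.mem_append_left _ ht),
          Model.trunc_eq_self fun t ht => hall t (List.mem_append_right _ ht)]
      rw [hM]
      exact .nil M
    | cons t L₂ ih =>
      intro L₁ hL hwf₁
      have htS : t.tvar ∉ tvarSet L₁ := by
        intro h
        rw [hL, List.map_append, List.map_cons, List.nodup_append'] at hnodupL
        exact hnodupL.2.2 h List.mem_cons_self
      have hclosed : ∀ p ∈ M.input.specs ++ M.output.specs, ∀ z, p.introduces z →
          z ∈ tvarSet L₁ → p.tvar ∈ tvarSet L₁ := by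
        intro p hp z hz hzS
        obtain ⟨s, hs, rfl⟩ := List.mem_map.1 hzS
        obtain ⟨K₁, K₂, rfl⟩ := List.append_of_mem hs
        have hpK := hbefore K₁ (K₂ ++ t :: L₂) s p (by simpa using hL) ((hmem p).1 hp) (.inl hz)
        exact List.mem_map_of_mem (List.mem_append_left _ hpK)
      obtain ⟨happly, hwf'⟩ := TaskModel.applySpec_trunc_insert hwf hwf₁
        ((hmem t).2 (by simp [hL])) htS hclosed
        fun p hp hdep => List.mem_map_of_mem (hbefore L₁ L₂ t p hL ((hmem p).1 hp) hdep)
      rw [← tvarSet_append_singleton] at happly hwf'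
      exact .cons _ _ _ t L₂ happly hwf' (ih (L₁ ++ [t]) (by simpa using hL) hwf')
  have hinit : M.trunc (tvarSet ([] : List (TransSpec V E))) =
      ⟨.unknown M.input.rootVar, .unknown M.output.rootVar⟩ := by
    rw [TaskModel.trunc, Model.trunc_of_rootVar_notMem (by simp [tvarSet]),
      Model.trunc_of_rootVar_notMem (by simp [tvarSet])]
  rw [← hinit]
  refine hchain L [] rfl ⟨TaskModel.nodup_vars_trunc _ hwf.1, ?_, ?_⟩ <;> simp [hinit]
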